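/- Let X ∈ GL(n, K̄) and assume that for every σ ∈ Gal(K̄/K) the matrix X⁻¹·σ(X) is diagonal. Then there exist an invertible matrix Q ∈ GL(n, K̄) all of whose entries lie in the image of K under the algebra map K → K̄, and an invertible diagonal matrix D ∈ GL(n, K̄), such that X = Q·D. -/

import Mathlib

noncomputable section

/-- `K = ℂ((ℏ))`, the field of formal Laurent series over `ℂ`. -/
abbrev K : Type := LaurentSeries ℂ

/-- A fixed algebraic closure of `K`. -/
abbrev Kbar : Type := AlgebraicClosure K

/-- Over a Galois extension `L/F`, an invertible matrix `X` such that `X⁻¹ * σ(X)` is diagonal for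
every `σ` in the Galois group is the product of a matrix with entries in `F` and an invertible
diagonal matrix: rescale each column of `X` by one of its nonzero entries. -/
theorem exists_eq_mul_isDiag_of_forall_isDiag_inv_mul_map {F L ι : Type*} [Field F] [Field L]
    [Algebra F L] [IsGalois F L] [Fintype ι] [DecidableEq ι] (X : Matrix ι ι L) (hX : IsUnit X)
    (h : ∀ σ : L ≃ₐ[F] L, (X⁻¹ * X.map σ).IsDiag) :
    ∃ Q D : Matrix ι ι L,
      IsUnit Q ∧ (∀ i j, Q i j ∈ (algebraMap F L).range) ∧ IsUnit D ∧ D.IsDiag ∧ X = Q * D := by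
  have hdet : IsUnit X.det := (Matrix.isUnit_iff_isUnit_det X).mp hX
  have hcol : ∀ j, ∃ i, X i j ≠ 0 := by
    intro j
    by_contra! hj
    exact hdet.ne_zero (Matrix.det_eq_zero_of_column_eq_zero j hj)
  choose p hp using hcol
  have hσ (σ : L ≃ₐ[F] L) (i j : ι) : σ (X i j) = X i j * (X⁻¹ * X.map σ) j j := by
    have hmul : X * (X⁻¹ * X.map σ) = X.map σ := Matrix.mul_nonsing_inv_cancel_left X _ hdet
    have hij := congrFun (congrFun hmul i) j
    rw [← (h σ).diagonal_diag, Matrix.mul_diagonal] at hij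
    exact hij.symm
  have hD : IsUnit (Matrix.diagonal fun j => X (p j) j) := by
    rw [Matrix.isUnit_diagonal, Pi.isUnit_iff]
    exact fun j => (hp j).isUnit
  have hprod : X = Matrix.of (fun i j => X i j / X (p j) j) *
      Matrix.diagonal fun j => X (p j) j := by
    ext i j
    rw [Matrix.mul_diagonal, Matrix.of_apply, div_mul_cancel₀ _ (hp j)]
  refine ⟨_, _, ?_, fun i j => ?_, hD, Matrix.isDiag_diagonal _, hprod⟩
  · rw [hprod, Matrix.isUnit_iff_isUnit_det, Matrix.det_mul] at hX
    exact (Matrix.isUnit_iff_isUnit_det _).mpr (isUnit_of_mul_isUnit_left hX)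
  · refine (InfiniteGalois.mem_range_algebraMap_iff_fixed _).mpr fun σ => ?_
    have hc : (X⁻¹ * X.map σ) j j ≠ 0 := by
      intro hc
      have := hσ σ (p j) j
      rw [hc, mul_zero, map_eq_zero] at this
      exact hp j this
    rw [Matrix.of_apply, map_div₀, hσ σ i j, hσ σ (p j) j, mul_div_mul_right _ _ hc]

/-- If `X ∈ GL(n, K̄)` satisfies that `X⁻¹·σ(X)` is diagonal for every
`σ ∈ Gal(K̄/K)`, then `X = Q·D` with `Q ∈ GL(n, K̄)` having all entries in (the
image of) `K`, and `D` an invertible diagonal matrix. -/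
theorem statement3 (n : ℕ) (X : Matrix (Fin n) (Fin n) Kbar) (hX : IsUnit X)
    (h : ∀ σ : Kbar ≃ₐ[K] Kbar, (X⁻¹ * X.map σ).IsDiag) :
    ∃ Q D : Matrix (Fin n) (Fin n) Kbar,
      IsUnit Q ∧ (∀ i j, Q i j ∈ (algebraMap K Kbar).range) ∧
      IsUnit D ∧ D.IsDiag ∧ X = Q * D := by
  have : CharZero K := charZero_of_injective_algebraMap (algebraMap ℂ K).injective
  have : IsGalois K Kbar := {}
  exact exists_eq_mul_isDiag_of_forall_isDiag_inv_mul_map X hX h
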